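/- arXiv:1205.6980 — 4 statements merged into one kernel-verified Lean document; each statement's English description precedes it below -/
import Mathlib

section
/- Let δ ∈ ℤ and let λ be a partition. Then P_λ(δ) ≠ 0 if and only if deg_δ(λ) = deg_δ(∅), i.e. if and only if λ is δ-regular. -/
open Polynomial

/-- A partition: a weakly decreasing, finitely supported sequence of naturals λ_1, λ_2, …. -/
structure Ptn where
  toFun : ℕ+ → ℕ
  antitone' : ∀ i j : ℕ+, i ≤ j → toFun j ≤ toFun i
  finite_support' : ∃ N : ℕ+, ∀ i : ℕ+, N ≤ i → toFun i = 0

namespace Ptn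

/-- The transpose partition: λ^T_i = #{k ≥ 1 : λ_k ≥ i}. -/
noncomputable def transpose (p : Ptn) (i : ℕ+) : ℕ :=
  Set.ncard {k : ℕ+ | (i : ℕ) ≤ p.toFun k}

/-- The empty partition. -/
def empty : Ptn where
  toFun := fun _ => 0
  antitone' := fun _ _ _ => le_refl 0
  finite_support' := ⟨1, fun _ _ => rfl⟩

end Ptn

/-- e_δ(λ)_i = λ^T_i − δ/2 − i + 1. -/
noncomputable def ed (δ : ℤ) (p : Ptn) (i : ℕ+) : ℚ :=
  (p.transpose i : ℚ) - (δ : ℚ) / 2 - ((i : ℕ) : ℚ) + 1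

/-- The δ-degree of singularity: #{(i,j) : 1 ≤ i < j, e_δ(λ)_i + e_δ(λ)_j = 0}. -/
noncomputable def degd (δ : ℤ) (p : Ptn) : ℕ :=
  Set.ncard {q : ℕ+ × ℕ+ | q.1 < q.2 ∧ ed δ p q.1 + ed δ p q.2 = 0}

/-- The vertex set L: nonnegative integers if δ is even, {1/2, 3/2, …} if δ is odd. -/
def Lset (δ : ℤ) : Set ℚ :=
  {n : ℚ | 0 ≤ n ∧ ∃ k : ℤ, n + (δ : ℚ) / 2 = (k : ℚ)}

/-- Vertex n is labelled ∘ in x_λ: no entry of e_δ(λ) has absolute value n. -/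
def IsCirc (δ : ℤ) (p : Ptn) (n : ℚ) : Prop := ∀ i : ℕ+, |ed δ p i| ≠ n

/-- Vertex n is labelled × in x_λ: n > 0 and both n and −n occur as entries. -/
def IsTimes (δ : ℤ) (p : Ptn) (n : ℚ) : Prop :=
  0 < n ∧ (∃ i : ℕ+, ed δ p i = n) ∧ (∃ i : ℕ+, ed δ p i = -n)

/-- Vertex n is labelled ∧ in x_λ: n > 0, n occurs as an entry and −n does not. -/
def IsUp (δ : ℤ) (p : Ptn) (n : ℚ) : Prop :=
  0 < n ∧ (∃ i : ℕ+, ed δ p i = n) ∧ ¬ (∃ i : ℕ+, ed δ p i = -n)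

/-- Vertex n is labelled ∨ in x_λ: n > 0, −n occurs and n does not, or n = 0 and 0 occurs. -/
def IsDown (δ : ℤ) (p : Ptn) (n : ℚ) : Prop :=
  (0 < n ∧ (∃ i : ℕ+, ed δ p i = -n) ∧ ¬ (∃ i : ℕ+, ed δ p i = n)) ∨
  (n = 0 ∧ ∃ i : ℕ+, ed δ p i = 0)

/-- q is obtained from p by adding one box, in row k. -/
def AddBoxAt (p q : Ptn) (k : ℕ+) : Prop :=
  q.toFun k = p.toFun k + 1 ∧ ∀ t : ℕ+, t ≠ k → q.toFun t = p.toFun t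

/-- q is obtained from p by removing one box, from row l. -/
def RemoveBoxAt (p q : Ptn) (l : ℕ+) : Prop :=
  q.toFun l + 1 = p.toFun l ∧ ∀ t : ℕ+, t ≠ l → q.toFun t = p.toFun t

/-- A box is addable to p at position (k,i): λ_k + 1 = i and increasing the k-th part
yields a partition. -/
def AddableAt (p : Ptn) (k i : ℕ+) : Prop :=
  p.toFun k + 1 = (i : ℕ) ∧ ∃ q : Ptn, AddBoxAt p q k

/-- A box is removable from p at position (l,j): λ_l = j and decreasing the l-th part
yields a partition. -/
def RemovableAt (p : Ptn) (l j : ℕ+) : Prop :=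
  p.toFun l = (j : ℕ) ∧ ∃ q : Ptn, RemoveBoxAt p q l

/-- Edge of the Young graph: q is obtained from p by adding or removing a single box. -/
def YoungEdge (p q : Ptn) : Prop := (∃ k, AddBoxAt p q k) ∨ (∃ k, AddBoxAt q p k)

/-- d(i,j) = λ_i + λ_j − i − j + 1 if i ≤ j, and −λ^T_i − λ^T_j + i + j − 1 if i > j. -/
noncomputable def dbox (p : Ptn) (i j : ℕ+) : ℤ :=
  if (i : ℕ) ≤ (j : ℕ) then
    (p.toFun i : ℤ) + (p.toFun j : ℤ) - ((i : ℕ) : ℤ) - ((j : ℕ) : ℤ) + 1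
  else
    -(p.transpose i : ℤ) - (p.transpose j : ℤ) + ((i : ℕ) : ℤ) + ((j : ℕ) : ℤ) - 1

/-- Hook length h(i,j) = λ_i − j + λ^T_j − i + 1. -/
noncomputable def hook (p : Ptn) (i j : ℕ+) : ℤ :=
  (p.toFun i : ℤ) - ((j : ℕ) : ℤ) + (p.transpose j : ℤ) - ((i : ℕ) : ℤ) + 1

/-- The King polynomial P_λ(u) = ∏_{(i,j)∈[λ]} (u − 1 + d(i,j)) / h(i,j) ∈ ℚ[u]. -/
noncomputable def king (p : Ptn) : Polynomial ℚ :=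
  ∏ᶠ (q : ℕ+ × ℕ+) (_ : (q.2 : ℕ) ≤ p.toFun q.1),
    Polynomial.C ((hook p q.1 q.2 : ℚ))⁻¹ *
      (Polynomial.X + Polynomial.C ((dbox p q.1 q.2 : ℚ) - 1))

/-- (ρ_δ)_i = −δ/2 − i + 1. -/
def rhod (δ : ℤ) (i : ℕ+) : ℚ := -(δ : ℚ) / 2 - ((i : ℕ) : ℚ) + 1

/-- A sequence is dominant if it is strictly decreasing. -/
def Dominant (x : ℕ+ → ℚ) : Prop := ∀ i j : ℕ+, i < j → x j < x i

/-- ε_i: the sequence with 1 in position i and 0 elsewhere. -/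
def eps (i : ℕ+) : ℕ+ → ℚ := fun j => if j = i then 1 else 0

/-- Two sequences are adjacent if they differ by ±ε_i for some i. -/
def AdjacentSeq (x y : ℕ+ → ℚ) : Prop := ∃ i : ℕ+, y = x + eps i ∨ y = x - eps i

/-- x lies in the connected component of ρ_δ in the dominant part of the lattice graph:
x is dominant and is joined to ρ_δ by a finite chain of pairwise adjacent dominant
sequences. -/
def InComponent (δ : ℤ) (x : ℕ+ → ℚ) : Prop :=
  Dominant x ∧ ∃ (r : ℕ) (c : ℕ → ℕ+ → ℚ),
    c 0 = rhod δ ∧ c r = x ∧ (∀ t ≤ r, Dominant (c t)) ∧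
    ∀ t < r, AdjacentSeq (c t) (c (t + 1))

/-- λ ∈ A_δ: λ is joined to ∅ in the Young graph by a chain of δ-regular partitions. -/
def InAdelta (δ : ℤ) (p : Ptn) : Prop :=
  ∃ (r : ℕ) (c : ℕ → Ptn), c 0 = Ptn.empty ∧ c r = p ∧
    (∀ t ≤ r, degd δ (c t) = degd δ Ptn.empty) ∧
    ∀ t < r, YoungEdge (c t) (c (t + 1))

open Classical in
/-- Signed indicator of a set of integers. -/
noncomputable def sg (A : Set ℤ) (t : ℤ) : ℤ := if t ∈ A then 1 else -1

/-- Sum of the signs over the open interval `(m - y, y)`. -/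
noncomputable def FF (A : Set ℤ) (m y : ℤ) : ℤ := ∑ t ∈ Finset.Ioo (m - y) y, sg A t

theorem sg_mem {A : Set ℤ} {t : ℤ} (h : t ∈ A) : sg A t = 1 := by simp [sg, h]
theorem sg_not {A : Set ℤ} {t : ℤ} (h : t ∉ A) : sg A t = -1 := by simp [sg, h]

theorem FF_succ (A : Set ℤ) (m y : ℤ) (h : m < 2 * y) :
    FF A m (y + 1) = FF A m y + sg A y + sg A (m - y) := by
  unfold FF
  have : Finset.Ioo (m - (y + 1)) (y + 1) = insert y (insert (m - y) (Finset.Ioo (m - y) y)) := by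
    ext t; simp only [Finset.mem_Ioo, Finset.mem_insert]; omega
  rw [this, Finset.sum_insert, Finset.sum_insert]
  · ring
  · simp
  · simp only [Finset.mem_Ioo, Finset.mem_insert]; omega

theorem FF_odd (A : Set ℤ) (m y : ℤ) (h : 2 * y = m + 1) : FF A m y = 0 := by
  unfold FF
  have : Finset.Ioo (m - y) y = ∅ := by
    ext t; simp only [Finset.mem_Ioo, Finset.notMem_empty, iff_false]; omega
  rw [this]; simp

theorem FF_even (A : Set ℤ) (m y : ℤ) (h : 2 * y = m + 2) : FF A m y = sg A (y - 1) := by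
  unfold FF
  have : Finset.Ioo (m - y) y = {y - 1} := by
    ext t; simp only [Finset.mem_Ioo, Finset.mem_singleton]; omega
  rw [this]; simp

theorem FF_start (A : Set ℤ) (m : ℤ) :
    (2 * (m / 2 + 1) = m + 1 ∧ FF A m (m / 2 + 1) = 0) ∨
    (2 * (m / 2 + 1) = m + 2 ∧ FF A m (m / 2 + 1) = sg A (m / 2)) := by
  rcases (by omega : 2 * (m / 2 + 1) = m + 1 ∨ 2 * (m / 2 + 1) = m + 2) with h | h
  · exact Or.inl ⟨h, FF_odd A m _ h⟩
  · refine Or.inr ⟨h, ?_⟩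
    rw [FF_even A m _ h]; congr 1; ring

theorem sg_cases (A : Set ℤ) (t : ℤ) : (t ∈ A ∧ sg A t = 1) ∨ (t ∉ A ∧ sg A t = -1) := by
  by_cases h : t ∈ A
  · exact Or.inl ⟨h, sg_mem h⟩
  · exact Or.inr ⟨h, sg_not h⟩

theorem FF_parity (A : Set ℤ) (m y : ℤ) (h : m < 2 * y) : (FF A m y - m) % 2 = 1 := by
  have h' : m / 2 + 1 ≤ y := by omega
  clear h
  induction y, h' using Int.leInduction with
  | base =>
    have := FF_start A m
    have := sg_cases A (m / 2)
    omega
  | succ y hy ih =>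
    have := FF_succ A m y (by omega)
    have := sg_cases A y
    have := sg_cases A (m - y)
    omega

/-- The condition that a box factor vanishes, expressed via the walk `FF`. -/
def Zr (A : Set ℤ) (m : ℤ) : Prop :=
  ∃ y, (m < 2 * y ∧ y ∈ A ∧ m - y ∈ A ∧ FF A m y ≤ m - 1) ∨
    (m < 2 * y ∧ y ∉ A ∧ m - y ∉ A ∧ m + 3 ≤ FF A m y) ∨
    (2 * y = m ∧ y ∈ A ∧ 0 ≤ m)

theorem noAA_le (A : Set ℤ) (m Y : ℤ) (h : ∀ y, m ≤ 2 * y → y < Y → ¬ (y ∈ A ∧ m - y ∈ A))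
    (hY : m < 2 * Y) : FF A m Y ≤ m % 2 - 1 := by
  have h' : m / 2 + 1 ≤ Y := by omega
  clear hY
  induction Y, h' using Int.leInduction with
  | base =>
    have h1 := FF_start A m
    have h2 := sg_cases A (m / 2)
    have h3 := h (m / 2)
    rcases h1 with h1 | h1
    · omega
    · have : m - m / 2 = m / 2 := by omega
      rw [this] at h3
      have := h3 (by omega) (by omega)
      have : m / 2 ∉ A := by tauto
      rw [sg_not this] at h1
      omega
  | succ y hy ih =>
    have := FF_succ A m y (by omega)
    have h1 := sg_cases A y
    have h2 := sg_cases A (m - y)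
    have h3 := h y (by omega) (by omega)
    have := ih (fun z hz hz' => h z hz (by omega))
    have : sg A y + sg A (m - y) ≤ 0 := by
      rcases h1 with h1 | h1 <;> rcases h2 with h2 | h2 <;> first | tauto | omega
    omega

theorem noCC_ge (A : Set ℤ) (m Y : ℤ) (h : ∀ y, m < 2 * y → ¬ (y ∉ A ∧ m - y ∉ A))
    (hY : m < 2 * Y) : -1 ≤ FF A m Y := by
  have h' : m / 2 + 1 ≤ Y := by omega
  clear hY
  induction Y, h' using Int.leInduction with
  | base =>
    have h1 := FF_start A m
    have h2 := sg_cases A (m / 2)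
    omega
  | succ y hy ih =>
    have := FF_succ A m y (by omega)
    have h1 := sg_cases A y
    have h2 := sg_cases A (m - y)
    have h3 := h y (by omega)
    have : 0 ≤ sg A y + sg A (m - y) := by
      rcases h1 with h1 | h1 <;> rcases h2 with h2 | h2 <;> first | tauto | omega
    omega

theorem Zr_nonneg (A : Set ℤ) (m : ℤ) (hm : 0 ≤ m) :
    Zr A m ↔ ∃ y, m ≤ 2 * y ∧ y ∈ A ∧ m - y ∈ A := by
  constructor
  · rintro ⟨y, h | h | h⟩
    · exact ⟨y, by omega, h.2.1, h.2.2.1⟩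
    · by_contra hc
      have := noAA_le A m y (fun z hz _ hz' => hc ⟨z, hz, hz'⟩) h.1
      omega
    · refine ⟨y, by omega, h.2.1, ?_⟩
      have : m - y = y := by omega
      rw [this]; exact h.2.1
  · intro hex
    obtain ⟨y, hy, hmin⟩ := Int.exists_least_of_bdd (P := fun y => m ≤ 2 * y ∧ y ∈ A ∧ m - y ∈ A)
      ⟨0, fun z hz => by omega⟩ hex
    refine ⟨y, ?_⟩
    rcases eq_or_lt_of_le hy.1 with h | h
    · exact Or.inr (Or.inr ⟨h.symm, hy.2.1, hm⟩)
    · refine Or.inl ⟨h, hy.2.1, hy.2.2, ?_⟩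
      have := noAA_le A m y (fun z hz hzy hz' => by have := hmin z ⟨hz, hz'⟩; omega) h
      omega

theorem Zr_neg (A : Set ℤ) (m : ℤ) (hm : m < 0) (K : ℤ) (hK : ∀ y, K ≤ y → FF A m y = -m - 1) :
    Zr A m ↔ ∃ y, m < 2 * y ∧ y ∉ A ∧ m - y ∉ A := by
  constructor
  · rintro ⟨y, h | h | h⟩
    · by_contra hc
      have := noCC_ge A m y (fun z hz hz' => hc ⟨z, hz, hz'⟩) h.1
      omega
    · exact ⟨y, h.1, h.2.1, h.2.2.1⟩
    · omega
  · rintro ⟨y, h1, h2, h3⟩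
    by_contra hc
    have hy : FF A m y < m + 3 := by
      by_contra h
      exact hc ⟨y, Or.inr (Or.inl ⟨h1, h2, h3, by omega⟩)⟩
    have hp := FF_parity A m y h1
    have hs := FF_succ A m y h1
    rw [sg_not h2, sg_not h3] at hs
    have key : ∀ z, y + 1 ≤ z → FF A m z ≤ m - 1 := by
      intro z hz
      induction z, hz using Int.leInduction with
      | base => omega
      | succ z hz ih =>
        have := FF_succ A m z (by omega)
        have h1 := sg_cases A z
        have h2 := sg_cases A (m - z)
        have : sg A z + sg A (m - z) ≤ 0 := by
          rcases h1 with h1 | h1 <;> rcases h2 with h2 | h2 <;> try omega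
          exact absurd ⟨z, Or.inl ⟨by omega, h1.1, h2.1, ih⟩⟩ hc
        omega
    have := key (max K (y + 1)) (le_max_right _ _)
    have := hK (max K (y + 1)) (le_max_left _ _)
    omega

open Classical in
/-- Number of pairs with both members outside `A`, with upper member in the window. -/
noncomputable def nCC (A : Set ℤ) (m Y : ℤ) : ℕ :=
  ((Finset.Ico (m / 2 + 1) Y).filter (fun y => y ∉ A ∧ m - y ∉ A)).card

open Classical in
/-- Number of pairs with both members in `A`, with upper member in the window. -/
noncomputable def nAA (A : Set ℤ) (m Y : ℤ) : ℕ :=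
  ((Finset.Ico (m / 2 + 1) Y).filter (fun y => y ∈ A ∧ m - y ∈ A)).card

theorem FF_count (A : Set ℤ) (m Y : ℤ) (hY : m / 2 + 1 ≤ Y) :
    FF A m Y = FF A m (m / 2 + 1) + 2 * nAA A m Y - 2 * nCC A m Y := by
  induction Y, hY using Int.leInduction with
  | base => simp [nAA, nCC]
  | succ y hy ih =>
    have h := FF_succ A m y (by omega)
    have hI : Finset.Ico (m / 2 + 1) (y + 1) = insert y (Finset.Ico (m / 2 + 1) y) := by
      ext t; simp only [Finset.mem_Ico, Finset.mem_insert]; omega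
    have h1 := sg_cases A y
    have h2 := sg_cases A (m - y)
    rw [h, ih]
    unfold nAA nCC
    rw [hI, Finset.filter_insert, Finset.filter_insert]
    rcases h1 with h1 | h1 <;> rcases h2 with h2 | h2 <;> simp [h1, h2] <;> ring

namespace Ptn

theorem finite_ge (p : Ptn) (j : ℕ+) : {k : ℕ+ | (j : ℕ) ≤ p.toFun k}.Finite := by
  obtain ⟨N, hN⟩ := p.finite_support'
  refine (Set.finite_Iio N).subset ?_
  intro k hk
  simp only [Set.mem_ofPred_eq] at hk
  by_contra h
  have := hN k (by simpa using h)
  have := j.pos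
  omega

theorem ncard_Iic (i : ℕ+) : (Set.Iic i).ncard = (i : ℕ) := by
  have : Set.Iic i = ((Finset.Icc 1 i : Finset ℕ+) : Set ℕ+) := by
    ext x; simp
  rw [this, Set.ncard_coe_finset, PNat.card_Icc]; simp

theorem ncard_Iio (i : ℕ+) : (Set.Iio i).ncard + 1 = (i : ℕ) := by
  rw [← ncard_Iic i, ← Set.Iio_insert, Set.ncard_insert_of_notMem (by simp) (Set.finite_Iio i)]

theorem exists_pnat (n : ℕ) (h : 0 < n) : ∃ k : ℕ+, (k : ℕ) = n := ⟨⟨n, h⟩, rfl⟩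

theorem galois (p : Ptn) (i j : ℕ+) : (j : ℕ) ≤ p.toFun i ↔ (i : ℕ) ≤ p.transpose j := by
  unfold transpose
  constructor
  · intro h
    rw [← ncard_Iic i]
    refine Set.ncard_le_ncard ?_ (p.finite_ge j)
    intro k hk
    exact h.trans (p.antitone' k i hk)
  · intro h
    by_contra hc
    have h1 : {k : ℕ+ | (j : ℕ) ≤ p.toFun k} ⊆ Set.Iio i := by
      intro k hk
      by_contra hk'
      exact hc (le_trans hk (p.antitone' i k (by simpa using hk')))
    have := Set.ncard_le_ncard h1 (Set.finite_Iio i)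
    have := ncard_Iio i
    omega

theorem transpose_anti (p : Ptn) (i j : ℕ+) (h : i ≤ j) : p.transpose j ≤ p.transpose i := by
  unfold transpose
  refine Set.ncard_le_ncard ?_ (p.finite_ge i)
  intro k hk
  have : (i : ℕ) ≤ j := h
  exact this.trans hk

/-- Shifted parts. -/
def aa (p : Ptn) (i : ℕ+) : ℤ := (p.toFun i : ℤ) - ((i : ℕ) : ℤ)

/-- Shifted negatives of the parts of the transpose. -/
noncomputable def cc (p : Ptn) (i : ℕ+) : ℤ := ((i : ℕ) : ℤ) - 1 - (p.transpose i : ℤ)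

/-- The set of shifted parts. -/
def AS (p : Ptn) : Set ℤ := Set.range p.aa

theorem aa_anti (p : Ptn) {i j : ℕ+} (h : i < j) : p.aa j < p.aa i := by
  have := p.antitone' i j h.le
  have : (i : ℕ) < j := h
  unfold aa; omega

theorem cc_mono (p : Ptn) : StrictMono p.cc := by
  intro i j h
  have := p.transpose_anti i j h.le
  have : (i : ℕ) < j := h
  unfold cc; omega

theorem aa_lt_iff (p : Ptn) {i j : ℕ+} : p.aa j < p.aa i ↔ i < j := by
  constructor
  · intro h
    by_contra hc
    rcases eq_or_lt_of_le (not_lt.mp hc) with h' | h'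
    · subst h'; omega
    · have := p.aa_anti h'; omega
  · exact p.aa_anti

theorem aa_inj (p : Ptn) : Function.Injective p.aa := by
  intro i j h
  rcases lt_trichotomy i j with h' | h' | h'
  · have := p.aa_anti h'; omega
  · exact h'
  · have := p.aa_anti h'; omega

theorem cc_notMem (p : Ptn) (j : ℕ+) : p.cc j ∉ p.AS := by
  rintro ⟨i, hi⟩
  have := p.galois i j
  unfold aa cc at hi
  omega

theorem exists_cc (p : Ptn) (x : ℤ) (hx : x ∉ p.AS) : ∃ j, p.cc j = x := by
  have hex : ∃ i : ℕ+, p.aa i ≤ x := by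
    obtain ⟨N, hN⟩ := p.finite_support'
    obtain ⟨k, hk⟩ := exists_pnat ((N : ℕ) + x.natAbs + 1) (by omega)
    refine ⟨k, ?_⟩
    have h0 := hN k (by rw [← PNat.coe_le_coe]; omega)
    unfold aa
    rw [h0]
    omega
  obtain ⟨i, hi, hmin⟩ : ∃ i : ℕ+, p.aa i ≤ x ∧ ∀ k, k < i → ¬ p.aa k ≤ x := by
    classical
    exact ⟨PNat.find hex, PNat.find_spec hex, fun k hk => PNat.find_min hex hk⟩
  have hne : p.aa i ≠ x := fun h => hx ⟨i, h⟩
  have hlt : p.aa i < x := lt_of_le_of_ne hi hne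
  have hj : 0 < (x + i).toNat := by unfold aa at hlt; omega
  refine ⟨⟨(x + i).toNat, hj⟩, ?_⟩
  set j : ℕ+ := ⟨(x + i).toNat, hj⟩ with hjd
  have hjv : ((j : ℕ) : ℤ) = x + i := by
    rw [hjd, PNat.mk_coe]; omega
  have h1 : p.transpose j < i := by
    have := p.galois i j
    unfold aa at hlt
    omega
  have h2 : (i : ℕ) ≤ p.transpose j + 1 := by
    by_cases hi1 : (i : ℕ) = 1
    · omega
    · have hp := i.pos
      have hk0 : 0 < (i : ℕ) - 1 := by omega
      obtain ⟨k, hkv⟩ := exists_pnat _ hk0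
      have hk := hmin k (by rw [← PNat.coe_lt_coe]; omega)
      have := p.galois k j
      unfold aa at hk
      omega
  unfold cc
  omega

theorem notMem_iff (p : Ptn) (x : ℤ) : x ∉ p.AS ↔ ∃ j, p.cc j = x := by
  constructor
  · exact p.exists_cc x
  · rintro ⟨j, rfl⟩; exact p.cc_notMem j

open Classical in
theorem sum_sg_A (A : Set ℤ) (u v : ℤ) (h : u < v) :
    ∑ t ∈ Finset.Ioo u v, sg A t = 2 * (((Finset.Ioo u v).filter (· ∈ A)).card : ℤ) - (v - u - 1) := by
  have h1 : ∀ t, sg A t = 2 * (if t ∈ A then 1 else 0) - 1 := by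
    intro t; unfold sg; split_ifs <;> ring
  simp_rw [h1]
  rw [Finset.sum_sub_distrib, ← Finset.mul_sum, Finset.sum_boole]
  simp
  omega

open Classical in
theorem sum_sg_C (A : Set ℤ) (u v : ℤ) (h : u < v) :
    ∑ t ∈ Finset.Ioo u v, sg A t = (v - u - 1) - 2 * (((Finset.Ioo u v).filter (· ∉ A)).card : ℤ) := by
  have h1 : ∀ t, sg A t = 1 - 2 * (if t ∉ A then 1 else 0) := by
    intro t; unfold sg; split_ifs <;> simp_all
  simp_rw [h1]
  rw [Finset.sum_sub_distrib, ← Finset.mul_sum, Finset.sum_boole]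
  simp
  omega

theorem card_Ioo_pnat (i j : ℕ+) (h : i < j) : ((Finset.Ioo i j).card : ℤ) = (j : ℕ) - (i : ℕ) - 1 := by
  rw [PNat.card_Ioo]
  have : (i : ℕ) < j := h
  omega

theorem FF_aa (p : Ptn) (m : ℤ) (i j : ℕ+) (h : i < j) (hm : p.aa i + p.aa j = m) :
    FF p.AS m (p.aa i) = 2 * ((j : ℕ) - (i : ℕ) - 1) - (p.aa i - p.aa j - 1) := by
  classical
  unfold FF
  have hmj : m - p.aa i = p.aa j := by omega
  rw [hmj, sum_sg_A _ _ _ (p.aa_anti h)]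
  have : (Finset.Ioo (p.aa j) (p.aa i)).filter (· ∈ p.AS) = (Finset.Ioo i j).image p.aa := by
    ext t
    simp only [Finset.mem_filter, Finset.mem_Ioo, Finset.mem_image]
    constructor
    · rintro ⟨⟨h1, h2⟩, k, rfl⟩
      exact ⟨k, ⟨p.aa_lt_iff.1 h2, p.aa_lt_iff.1 h1⟩, rfl⟩
    · rintro ⟨k, ⟨h1, h2⟩, rfl⟩
      exact ⟨⟨p.aa_anti h2, p.aa_anti h1⟩, k, rfl⟩
  rw [this, Finset.card_image_of_injective _ p.aa_inj, card_Ioo_pnat i j h]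

theorem FF_cc (p : Ptn) (m : ℤ) (i j : ℕ+) (h : j < i) (hm : p.cc i + p.cc j = m) :
    FF p.AS m (p.cc i) = (p.cc i - p.cc j - 1) - 2 * ((i : ℕ) - (j : ℕ) - 1) := by
  classical
  unfold FF
  have hmj : m - p.cc i = p.cc j := by omega
  rw [hmj, sum_sg_C _ _ _ (p.cc_mono h)]
  have : (Finset.Ioo (p.cc j) (p.cc i)).filter (· ∉ p.AS) = (Finset.Ioo j i).image p.cc := by
    ext t
    simp only [Finset.mem_filter, Finset.mem_Ioo, Finset.mem_image, p.notMem_iff]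
    constructor
    · rintro ⟨⟨h1, h2⟩, k, rfl⟩
      exact ⟨k, ⟨p.cc_mono.lt_iff_lt.1 h1, p.cc_mono.lt_iff_lt.1 h2⟩, rfl⟩
    · rintro ⟨k, ⟨h1, h2⟩, rfl⟩
      exact ⟨⟨p.cc_mono h1, p.cc_mono h2⟩, k, rfl⟩
  rw [this, Finset.card_image_of_injective _ p.cc_mono.injective, card_Ioo_pnat j i h]

theorem FF_final (p : Ptn) (m : ℤ) : ∃ K, ∀ y, K ≤ y → FF p.AS m y = -m - 1 := by
  classical
  obtain ⟨N, hN⟩ := p.finite_support'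
  refine ⟨N + p.toFun 1 + |m| + 1, fun y hy => ?_⟩
  have hm1 := le_abs_self m
  have hm2 := neg_abs_le m
  have hNpos := N.pos
  have hn : 0 < (y - m).toNat := by omega
  set n : ℕ+ := ⟨(y - m).toNat, hn⟩ with hnd
  have hnv : ((n : ℕ) : ℤ) = y - m := by rw [hnd, PNat.mk_coe]; omega
  have hnN : N ≤ n := by rw [← PNat.coe_le_coe]; omega
  have han : p.aa n = m - y := by unfold aa; rw [hN n hnN]; omega
  unfold FF
  rw [sum_sg_A _ _ _ (by omega)]
  have : (Finset.Ioo (m - y) y).filter (· ∈ p.AS) = (Finset.Ico 1 n).image p.aa := by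
    ext t
    simp only [Finset.mem_filter, Finset.mem_Ioo, Finset.mem_image, Finset.mem_Ico]
    constructor
    · rintro ⟨⟨h1, h2⟩, k, rfl⟩
      rw [← han] at h1
      exact ⟨k, ⟨one_le, p.aa_lt_iff.1 h1⟩, rfl⟩
    · rintro ⟨k, ⟨h1, h2⟩, rfl⟩
      refine ⟨⟨by rw [← han]; exact p.aa_anti h2, ?_⟩, k, rfl⟩
      have := p.antitone' 1 k h1
      unfold aa
      omega
  rw [this, Finset.card_image_of_injective _ p.aa_inj, PNat.card_Ico]
  have : ((1 : ℕ+) : ℕ) = 1 := rfl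
  have := n.pos
  omega

/-- Vanishing of some factor of the King polynomial at `-m`. -/
theorem zero_iff (p : Ptn) (m : ℤ) :
    (∃ i j : ℕ+, (j : ℕ) ≤ p.toFun i ∧ dbox p i j - 1 = m) ↔ Zr p.AS m := by
  have hd1 : ∀ i j : ℕ+, (i : ℕ) ≤ j → dbox p i j - 1 = p.aa i + p.aa j := by
    intro i j h
    unfold dbox aa
    rw [if_pos h]; ring
  have hd2 : ∀ i j : ℕ+, (j : ℕ) < i → dbox p i j - 1 = p.cc i + p.cc j := by
    intro i j h
    unfold dbox cc
    rw [if_neg (by omega)]; ring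
  constructor
  · rintro ⟨i, j, hb, hz⟩
    rcases lt_trichotomy i j with h | h | h
    · have h' : (i : ℕ) < j := h
      rw [hd1 i j h'.le] at hz
      have hF := p.FF_aa m i j h hz
      have hlt := p.aa_anti h
      refine ⟨p.aa i, Or.inl ⟨by omega, ⟨i, rfl⟩, ⟨j, by omega⟩, ?_⟩⟩
      have : p.aa i = p.toFun i - (i : ℕ) := rfl
      omega
    · subst h
      rw [hd1 i i le_rfl] at hz
      refine ⟨p.aa i, Or.inr (Or.inr ⟨by omega, ⟨i, rfl⟩, ?_⟩)⟩
      have : p.aa i = p.toFun i - (i : ℕ) := rfl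
      omega
    · have h' : (j : ℕ) < i := h
      rw [hd2 i j h'] at hz
      have hF := p.FF_cc m i j h hz
      have hlt := p.cc_mono h
      refine ⟨p.cc i, Or.inr (Or.inl ⟨by omega, p.cc_notMem i, ?_, ?_⟩)⟩
      · have : m - p.cc i = p.cc j := by omega
        rw [this]; exact p.cc_notMem j
      · have : p.cc j = (j : ℕ) - 1 - p.transpose j := rfl
        have := (p.galois i j).1 hb
        omega
  · rintro ⟨y, h | h | h⟩
    · obtain ⟨hy, ⟨i, rfl⟩, ⟨j, hj⟩, hF⟩ := h
      have hij : i < j := p.aa_lt_iff.1 (by omega)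
      have h' : (i : ℕ) < j := hij
      rw [p.FF_aa m i j hij (by omega)] at hF
      refine ⟨i, j, ?_, ?_⟩
      · have : p.aa i = p.toFun i - (i : ℕ) := rfl
        omega
      · rw [hd1 i j h'.le]; omega
    · obtain ⟨hy, h1, h2, hF⟩ := h
      obtain ⟨i, rfl⟩ := p.exists_cc _ h1
      obtain ⟨j, hj⟩ := p.exists_cc _ h2
      have hij : j < i := p.cc_mono.lt_iff_lt.1 (by omega)
      have h' : (j : ℕ) < i := hij
      rw [p.FF_cc m i j hij (by omega)] at hF
      refine ⟨i, j, ?_, ?_⟩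
      · rw [p.galois]
        have : p.cc j = (j : ℕ) - 1 - p.transpose j := rfl
        omega
      · rw [hd2 i j h']; omega
    · obtain ⟨hy, ⟨i, rfl⟩, hm⟩ := h
      refine ⟨i, i, ?_, ?_⟩
      · have : p.aa i = p.toFun i - (i : ℕ) := rfl
        omega
      · rw [hd1 i i le_rfl]; omega

theorem degd_eq (p : Ptn) (δ : ℤ) :
    degd δ p = Set.ncard {y : ℤ | -δ < 2 * y ∧ y ∉ p.AS ∧ -δ - y ∉ p.AS} := by
  unfold degd
  have he : ∀ i j, ed δ p i + ed δ p j = 0 ↔ p.cc i + p.cc j = -δ := by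
    intro i j
    have : ed δ p i + ed δ p j = ((-(p.cc i + p.cc j) - δ : ℤ) : ℚ) := by
      unfold ed cc; push_cast; ring
    rw [this, Int.cast_eq_zero]; omega
  refine Set.ncard_congr (fun q _ => p.cc q.2) ?_ ?_ ?_
  · rintro ⟨i, j⟩ ⟨h1, h2⟩
    rw [he] at h2
    have := p.cc_mono h1
    refine ⟨by simp only at *; omega, p.cc_notMem _, ?_⟩
    have : -δ - p.cc j = p.cc i := by simp only at *; omega
    simp only [this]
    exact p.cc_notMem _
  · rintro ⟨i, j⟩ ⟨i', j'⟩ ⟨h1, h2⟩ ⟨h1', h2'⟩ h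
    rw [he] at h2 h2'
    simp only at *
    have hj := p.cc_mono.injective h
    have hi := p.cc_mono.injective (show p.cc i = p.cc i' by omega)
    rw [hi, hj]
  · rintro y ⟨h0, h1, h2⟩
    obtain ⟨j, rfl⟩ := p.exists_cc _ h1
    obtain ⟨i, hi⟩ := p.exists_cc _ h2
    exact ⟨(i, j), ⟨p.cc_mono.lt_iff_lt.1 (show p.cc i < p.cc j by omega), (he i j).2 (by omega)⟩, rfl⟩

theorem cc_bound (p : Ptn) (x : ℤ) (h : x ∉ p.AS) : p.cc 1 ≤ x := by
  obtain ⟨j, rfl⟩ := p.exists_cc x h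
  exact p.cc_mono.monotone one_le

theorem CC_finite (p : Ptn) (m : ℤ) : {y : ℤ | m < 2 * y ∧ y ∉ p.AS ∧ m - y ∉ p.AS}.Finite := by
  refine (Set.finite_Icc (p.cc 1) (m - p.cc 1)).subset ?_
  rintro y ⟨_, h1, h2⟩
  have := p.cc_bound _ h1
  have := p.cc_bound _ h2
  exact ⟨by omega, by omega⟩

theorem degd_nCC (p : Ptn) (δ Y : ℤ) (hY : -δ - p.cc 1 < Y) : degd δ p = nCC p.AS (-δ) Y := by
  classical
  rw [degd_eq, nCC, ← Set.ncard_coe_finset]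
  congr 1
  ext y
  simp only [Finset.coe_filter, Finset.mem_Ico, Set.mem_ofPred_eq]
  constructor
  · rintro ⟨h0, h1, h2⟩
    have := p.cc_bound _ h2
    exact ⟨⟨by omega, by omega⟩, h1, h2⟩
  · rintro ⟨h0, h1, h2⟩
    exact ⟨by omega, h1, h2⟩

theorem mem_AS_empty (x : ℤ) : x ∈ Ptn.empty.AS ↔ x < 0 := by
  constructor
  · rintro ⟨i, rfl⟩
    have := i.pos
    simp [aa, Ptn.empty]
  · intro h
    obtain ⟨k, hk⟩ := exists_pnat x.natAbs (by omega)
    refine ⟨k, ?_⟩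
    simp only [aa, Ptn.empty]
    omega

theorem degd_iff (p : Ptn) (δ : ℤ) : degd δ p = degd δ Ptn.empty ↔ ¬ Zr p.AS (-δ) := by
  generalize hmd : -δ = m
  rcases lt_or_ge m 0 with hm | hm
  · obtain ⟨K, hK⟩ := p.FF_final m
    rw [Zr_neg p.AS m hm K hK]
    have h0 : degd δ Ptn.empty = 0 := by
      rw [degd_eq, hmd, Set.ncard_eq_zero (CC_finite _ _), Set.eq_empty_iff_forall_notMem]
      rintro y ⟨_, h1, h2⟩
      rw [mem_AS_empty] at h1 h2
      omega
    rw [h0, degd_eq, hmd, Set.ncard_eq_zero (CC_finite _ _), Set.eq_empty_iff_forall_notMem]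
    simp only [Set.mem_ofPred_eq, not_exists]
  · rw [Zr_nonneg p.AS m hm]
    obtain ⟨K, hK⟩ := p.FF_final m
    obtain ⟨K', hK'⟩ := Ptn.empty.FF_final m
    obtain ⟨Y0, hY0⟩ : ∃ Y0 : ℤ, Y0 = max (max K K') (max (max (m - p.cc 1 + 1)
      (m - Ptn.empty.cc 1 + 1)) (m / 2 + 1)) := ⟨_, rfl⟩
    -- all sufficiently large windows give the same balance
    have key : ∀ Y, Y0 ≤ Y → FF p.AS m (m / 2 + 1) + 2 * nAA p.AS m Y - 2 * degd δ p =
        FF Ptn.empty.AS m (m / 2 + 1) - 2 * degd δ Ptn.empty := by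
      intro Y hY
      have e1 := hK Y (by omega)
      have e2 := hK' Y (by omega)
      rw [FF_count _ _ _ (by omega)] at e1 e2
      rw [degd_nCC p δ Y (by omega), degd_nCC Ptn.empty δ Y (by omega), hmd, e1]
      have : nAA Ptn.empty.AS m Y = 0 := by
        classical
        unfold nAA
        rw [Finset.card_eq_zero, Finset.filter_eq_empty_iff]
        rintro y _ ⟨h1, h2⟩
        rw [mem_AS_empty] at h1 h2
        omega
      rw [this] at e2
      omega
    have s1 := FF_start p.AS m
    have s2 := FF_start Ptn.empty.AS m
    have hmid : m / 2 ∉ Ptn.empty.AS := by rw [mem_AS_empty]; omega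
    rw [sg_not hmid] at s2
    have s3 := sg_cases p.AS (m / 2)
    constructor
    · rintro hdeg ⟨y, h1, h2, h3⟩
      have hk := key (max Y0 (y + 1)) (le_max_left _ _)
      have hz : nAA p.AS m (max Y0 (y + 1)) = 0 ∧ FF p.AS m (m / 2 + 1) = FF Ptn.empty.AS m (m / 2 + 1) := by
        omega
      rcases eq_or_lt_of_le h1 with h | h
      · have hy : y = m / 2 := by omega
        rw [hy] at h2
        rw [sg_mem h2] at s1
        omega
      · have hz1 := hz.1
        classical
        unfold nAA at hz1
        rw [Finset.card_eq_zero, Finset.filter_eq_empty_iff] at hz1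
        exact hz1 (Finset.mem_Ico.2 ⟨by omega, by omega⟩) ⟨h2, h3⟩
    · intro hno
      have hk := key Y0 le_rfl
      have hz : nAA p.AS m Y0 = 0 := by
        classical
        unfold nAA
        rw [Finset.card_eq_zero, Finset.filter_eq_empty_iff]
        intro y hy hc
        rw [Finset.mem_Ico] at hy
        exact hno ⟨y, by omega, hc⟩
      rcases s1 with s1 | s1
      · omega
      · have : m / 2 ∉ p.AS := by
          intro hc
          refine hno ⟨m / 2, by omega, hc, ?_⟩
          have : m - m / 2 = m / 2 := by omega
          rw [this]; exact hc
        rw [sg_not this] at s1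
        omega

theorem boxes_finite (p : Ptn) : {q : ℕ+ × ℕ+ | (q.2 : ℕ) ≤ p.toFun q.1}.Finite := by
  obtain ⟨N, hN⟩ := p.finite_support'
  obtain ⟨M, hM⟩ := exists_pnat (p.toFun 1 + 1) (by omega)
  refine ((Set.finite_Iic N).prod (Set.finite_Iic M)).subset ?_
  rintro ⟨i, j⟩ h
  simp only [Set.mem_ofPred_eq] at h
  have hj := j.pos
  refine ⟨?_, ?_⟩
  · by_contra hc
    have := hN i (by simpa using (not_le.1 hc).le)
    omega
  · have := p.antitone' 1 i one_le
    change j ≤ M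
    rw [← PNat.coe_le_coe]
    omega

theorem king_zero_iff (p : Ptn) (δ : ℤ) :
    (king p).eval (δ : ℚ) = 0 ↔ ∃ i j : ℕ+, (j : ℕ) ≤ p.toFun i ∧ dbox p i j - 1 = -δ := by
  have hk : king p = ∏ q ∈ p.boxes_finite.toFinset,
      Polynomial.C ((hook p q.1 q.2 : ℚ))⁻¹ *
      (Polynomial.X + Polynomial.C ((dbox p q.1 q.2 : ℚ) - 1)) := by
    rw [← finprod_mem_eq_finite_toFinset_prod]
    rfl
  rw [hk, Polynomial.eval_prod, Finset.prod_eq_zero_iff]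
  constructor
  · rintro ⟨⟨i, j⟩, hq, h⟩
    have hb : (j : ℕ) ≤ p.toFun i := by simpa using hq
    have hb' := (p.galois i j).1 hb
    have hh : (hook p i j : ℚ) ≠ 0 := by
      rw [Int.cast_ne_zero]; unfold hook; omega
    refine ⟨i, j, hb, ?_⟩
    simp only [Polynomial.eval_mul, Polynomial.eval_C, Polynomial.eval_add, Polynomial.eval_X] at h
    have h2 := (mul_eq_zero.1 h).resolve_left (inv_ne_zero hh)
    have h3 : ((δ + (dbox p i j - 1) : ℤ) : ℚ) = 0 := by push_cast; exact h2
    rw [Int.cast_eq_zero] at h3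
    omega
  · rintro ⟨i, j, hb, h⟩
    refine ⟨(i, j), by simpa using hb, ?_⟩
    simp only [Polynomial.eval_mul, Polynomial.eval_C, Polynomial.eval_add, Polynomial.eval_X]
    have h3 : ((δ + (dbox p i j - 1) : ℤ) : ℚ) = 0 := by rw [Int.cast_eq_zero]; omega
    push_cast at h3
    rw [h3, mul_zero]

end Ptn

/-- P_λ(δ) ≠ 0 iff λ is δ-regular, i.e. deg_δ(λ) = deg_δ(∅). -/
theorem stmt11 (δ : ℤ) (p : Ptn) :
    (king p).eval (δ : ℚ) ≠ 0 ↔ degd δ p = degd δ Ptn.empty := by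
  rw [Ptn.degd_iff, ← Ptn.zero_iff, ← Ptn.king_zero_iff]
end

section
/- Let λ be a partition with a box addable at position (k,i), and set μ := λ ∪ (k,i). Suppose a box is addable to μ at position (l,j) with l ≠ k, and set ν := μ ∪ (l,j). If i ≠ j then (ν_l − l) − (μ_k − k) = (λ^T_i − i) − (λ^T_j − j); equivalently, for every δ ∈ ℤ, (ν_l − l) − (μ_k − k) = e_δ(λ)_i − e_δ(λ)_j. If i = j then l = k + 1 and (ν_l − l) − (μ_k − k) = −1. (This is the geometric evaluation of the Brauer diamond ◊(S,S) for the up-up walk S = (λ, μ, ν): for i ≠ j it equals ⟨e_δ(λ), ε_i − ε_j⟩.) -/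
open Polynomial

theorem addBox_transpose (p q : Ptn) (k i : ℕ+) (h : AddBoxAt p q k)
    (hi : p.toFun k + 1 = (i : ℕ)) : p.transpose i + 1 = (k : ℕ) := by
  have hs : {t : ℕ+ | (i : ℕ) ≤ p.toFun t} = ((Finset.Iio k : Finset ℕ+) : Set ℕ+) := by
    ext t
    simp only [Set.mem_setOf_eq, Finset.coe_Iio, Set.mem_Iio]
    constructor
    · intro ht
      by_contra hn
      have := p.antitone' k t (not_lt.mp hn)
      omega
    · intro ht
      have h3 := q.antitone' t k ht.le
      rw [h.1, h.2 t ht.ne] at h3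
      omega
  have hIio : (Finset.Iio k : Finset ℕ+) = Finset.Ico 1 k := by
    ext t
    simp
  have hk := k.pos
  unfold Ptn.transpose
  rw [hs, Set.ncard_coe_finset, hIio, PNat.card_Ico]
  simp only [PNat.one_coe]
  omega

/-- up-up Brauer diamond. μ = λ ∪ (k,i), ν = μ ∪ (l,j) with l ≠ k.
If i ≠ j then (ν_l − l) − (μ_k − k) = (λ^T_i − i) − (λ^T_j − j) = e_δ(λ)_i − e_δ(λ)_j
for every δ; if i = j then l = k + 1 and the quantity equals −1. -/
theorem stmt13 (p μ ν : Ptn) (k i l j : ℕ+)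
    (h1 : AddableAt p k i) (hμ : AddBoxAt p μ k)
    (hlk : l ≠ k)
    (h2 : AddableAt μ l j) (hν : AddBoxAt μ ν l) :
    (i ≠ j →
      (((ν.toFun l : ℤ) - ((l : ℕ) : ℤ)) - ((μ.toFun k : ℤ) - ((k : ℕ) : ℤ))
          = ((p.transpose i : ℤ) - ((i : ℕ) : ℤ)) - ((p.transpose j : ℤ) - ((j : ℕ) : ℤ))) ∧
      ∀ δ : ℤ,
        ((((ν.toFun l : ℤ) - ((l : ℕ) : ℤ)) - ((μ.toFun k : ℤ) - ((k : ℕ) : ℤ))) : ℚ)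
          = ed δ p i - ed δ p j) ∧
    (i = j → l = k + 1 ∧
      ((ν.toFun l : ℤ) - ((l : ℕ) : ℤ)) - ((μ.toFun k : ℤ) - ((k : ℕ) : ℤ)) = -1) := by
  have hk := addBox_transpose p μ k i hμ h1.1
  have hl := addBox_transpose μ ν l j hν h2.1
  have h1' := h1.1
  have h2' := h2.1
  have hμk := hμ.1
  have hμl := hμ.2 l hlk
  have hνl := hν.1
  have hνk := hν.2 k hlk.symm
  constructor
  · intro hij
    have hij' : (i : ℕ) ≠ j := fun h => hij (PNat.eq h)
    have ht : p.transpose j = μ.transpose j := by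
      unfold Ptn.transpose
      congr 1
      ext t
      simp only [Set.mem_setOf_eq]
      by_cases htk : t = k
      · subst htk
        omega
      · rw [hμ.2 t htk]
    have key : (((ν.toFun l : ℤ) - ((l : ℕ) : ℤ)) - ((μ.toFun k : ℤ) - ((k : ℕ) : ℤ))
          = ((p.transpose i : ℤ) - ((i : ℕ) : ℤ)) - ((p.transpose j : ℤ) - ((j : ℕ) : ℤ))) := by
      omega
    refine ⟨key, fun δ => ?_⟩
    have key' := congrArg (fun z : ℤ => (z : ℚ)) key
    push_cast at key'
    unfold ed
    push_cast
    linarith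
  · intro hij
    subst hij
    have hkl : k < l := by
      by_contra hn
      have := μ.antitone' l k (not_lt.mp hn)
      omega
    have hl1 : l = k + 1 := by
      by_contra hne
      have hle : k + 1 ≤ l := PNat.add_one_le_iff.mpr hkl
      have h3 := ν.antitone' (k + 1) l hle
      have hkk : k + 1 ≠ k := (PNat.lt_add_right k 1).ne'
      rw [hν.2 (k + 1) (Ne.symm hne), hμ.2 (k + 1) hkk] at h3
      have h4 := p.antitone' k (k + 1) (PNat.lt_add_right k 1).le
      omega
    refine ⟨hl1, ?_⟩
    have : (l : ℕ) = k + 1 := by rw [hl1]; rfl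
    omega
end

section
/- Let δ ∈ ℤ. A partition λ belongs to A_δ if and only if one of the following holds: (i) δ ≥ 0 and λ^T_1 + λ^T_2 ≤ δ; (ii) δ < 0 is even and λ_1 ≤ −δ/2; (iii) δ < 0 is odd and λ_1 + λ_2 ≤ 2 − δ. -/
open Polynomial

namespace Ptn

theorem fin_set (p : Ptn) (i : ℕ+) : {k : ℕ+ | (i : ℕ) ≤ p.toFun k}.Finite := by
  obtain ⟨N, hN⟩ := p.finite_support'
  refine (Set.finite_Iio N).subset ?_
  intro k hk
  by_contra h
  have h1 := hN k (not_lt.mp h)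
  have h2 := i.pos
  simp only [Set.mem_setOf_eq] at hk
  omega

theorem le_transpose (p : Ptn) (i k : ℕ+) : (k : ℕ) ≤ p.transpose i ↔ (i : ℕ) ≤ p.toFun k := by
  constructor
  · intro h
    by_contra hk
    have hs : {t : ℕ+ | (i : ℕ) ≤ p.toFun t} ⊆ ((Finset.Ico 1 k : Finset ℕ+) : Set ℕ+) := by
      intro t ht
      simp only [Set.mem_setOf_eq] at ht
      simp only [Finset.coe_Ico, Set.mem_Ico, PNat.one_le, true_and]
      by_contra h2
      have := p.antitone' k t (not_lt.mp h2)
      omega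
    have h3 := Set.ncard_le_ncard hs (Finset.finite_toSet _)
    rw [Set.ncard_coe_finset, PNat.card_Ico] at h3
    have := k.pos
    unfold transpose at h
    simp at h3
    omega
  · intro h
    have hs : ((Finset.Icc 1 k : Finset ℕ+) : Set ℕ+) ⊆ {t : ℕ+ | (i : ℕ) ≤ p.toFun t} := by
      intro t ht
      simp only [Finset.coe_Icc, Set.mem_Icc, PNat.one_le, true_and] at ht
      have := p.antitone' t k ht
      simp only [Set.mem_setOf_eq]
      omega
    have h3 := Set.ncard_le_ncard hs (p.fin_set i)
    rw [Set.ncard_coe_finset, PNat.card_Icc] at h3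
    unfold transpose
    simp at h3
    omega

theorem transpose_mono (p q : Ptn) (h : ∀ k, p.toFun k ≤ q.toFun k) (i : ℕ+) :
    p.transpose i ≤ q.transpose i := by
  unfold transpose
  refine Set.ncard_le_ncard ?_ (q.fin_set i)
  intro k hk
  simp only [Set.mem_setOf_eq] at *
  have := h k
  omega

theorem transpose_zero (p : Ptn) (i : ℕ+) (h : p.toFun 1 < i) : p.transpose i = 0 := by
  by_contra hc
  have h1 := (p.le_transpose i 1).1 (by simp; omega)
  omega

theorem transpose_empty (i : ℕ+) : empty.transpose i = 0 :=
  transpose_zero _ _ (by simp [empty])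

/-- shifted integer entries -/
noncomputable def xx (p : Ptn) (i : ℕ+) : ℤ := (p.transpose i : ℤ) - (i : ℕ) + 1

theorem xx_lt (p : Ptn) {i j : ℕ+} (h : i < j) : p.xx j < p.xx i := by
  have h1 := p.transpose_anti i j h.le
  have h2 : (i : ℕ) < j := h
  unfold xx
  omega

theorem xx_inj (p : Ptn) : Function.Injective p.xx := by
  intro i j h
  rcases lt_trichotomy i j with h1 | h1 | h1
  · have := p.xx_lt h1; omega
  · exact h1
  · have := p.xx_lt h1; omega

theorem xx_lt_iff (p : Ptn) {i j : ℕ+} : p.xx j < p.xx i ↔ i < j := by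
  refine ⟨fun h => ?_, p.xx_lt⟩
  by_contra hc
  rcases (not_lt.mp hc).lt_or_eq with h1 | h1
  · have := p.xx_lt h1; omega
  · subst h1; omega

def X (p : Ptn) : Set ℤ := Set.range p.xx

theorem notMem_X (p : Ptn) (a : ℤ) : a ∉ p.X ↔ ∃ j : ℕ+, a = (j : ℕ) - (p.toFun j : ℤ) := by
  constructor
  · intro h
    have hex : ∃ n : ℕ, ∃ hn : 0 < n, p.xx ⟨n, hn⟩ < a := by
      refine ⟨p.toFun 1 + 2 + a.natAbs, by omega, ?_⟩
      have hz := p.transpose_zero ⟨p.toFun 1 + 2 + a.natAbs, by omega⟩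
        (by simp only [PNat.mk_coe]; omega)
      have e0 : p.xx ⟨p.toFun 1 + 2 + a.natAbs, by omega⟩
        = (p.transpose ⟨p.toFun 1 + 2 + a.natAbs, by omega⟩ : ℤ)
          - ((p.toFun 1 + 2 + a.natAbs : ℕ) : ℤ) + 1 := rfl
      rw [e0, hz]
      omega
    classical
    have hs := Nat.find_spec hex
    have hm := fun m => Nat.find_min hex (m := m)
    set n := Nat.find hex
    obtain ⟨hn, hlt⟩ := hs
    have e1 : p.xx ⟨n, hn⟩ = (p.transpose ⟨n, hn⟩ : ℤ) - n + 1 := rfl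
    have hj : 0 < (a + n - 1).toNat := by omega
    refine ⟨⟨(a + n - 1).toNat, hj⟩, ?_⟩
    have h1 : ¬ (n ≤ p.toFun ⟨(a + n - 1).toNat, hj⟩) := by
      have := (p.le_transpose ⟨n, hn⟩ ⟨(a + n - 1).toNat, hj⟩).not
      simp only [PNat.mk_coe] at this
      rw [← this]
      omega
    have h2 : n - 1 ≤ p.toFun ⟨(a + n - 1).toNat, hj⟩ := by
      by_cases hn1 : n = 1
      · omega
      · have hn' : 0 < n - 1 := by omega
        have h3 := hm (n - 1) (by omega)
        have h4 : ¬ p.xx ⟨n - 1, hn'⟩ < a := fun h => h3 ⟨hn', h⟩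
        have h5 : p.xx ⟨n - 1, hn'⟩ ≠ a := fun h' => h ⟨_, h'⟩
        have e2 : p.xx ⟨n - 1, hn'⟩ = (p.transpose ⟨n - 1, hn'⟩ : ℤ) - ((n - 1 : ℕ) : ℤ) + 1 := rfl
        have := (p.le_transpose ⟨n - 1, hn'⟩ ⟨(a + n - 1).toNat, hj⟩)
        simp only [PNat.mk_coe] at this
        rw [← this]
        omega
    simp only [PNat.mk_coe]
    omega
  · rintro ⟨j, rfl⟩ ⟨i, hi⟩
    unfold xx at hi
    have := p.le_transpose i j
    omega

theorem X_card (p : Ptn) (δ : ℤ) (N : ℤ) (h0 : 0 ≤ N - δ) (hN : (p.toFun 1 : ℤ) ≤ N - δ) 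
    (hN' : (p.transpose 1 : ℤ) ≤ N) :
    open Classical in
    (((Finset.Icc (δ - N) N).filter (fun a => a ∈ p.X)).card : ℤ) = N - δ + 1 := by
  classical
  obtain ⟨M, hM⟩ : ∃ M : ℕ+, (M : ℕ) = (N - δ + 1).toNat := ⟨⟨(N - δ + 1).toNat, by omega⟩, rfl⟩
  have : (Finset.Icc (δ - N) N).filter (fun a => a ∈ p.X)
      = (Finset.Icc (1 : ℕ+) M).image p.xx := by
    ext a
    simp only [Finset.mem_filter, Finset.mem_Icc, Finset.mem_image, PNat.one_le, true_and]
    constructor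
    · rintro ⟨⟨h1, h2⟩, i, rfl⟩
      refine ⟨i, ?_, rfl⟩
      by_contra hc
      have hc' : (M : ℕ) < (i : ℕ) := not_le.mp hc
      have := p.transpose_zero i (by omega)
      unfold xx at h1
      omega
    · rintro ⟨i, hi, rfl⟩
      have hi' : (i : ℕ) ≤ M := hi
      have h3 := p.transpose_anti 1 i (PNat.one_le i)
      have h4 := i.pos
      refine ⟨?_, i, rfl⟩
      unfold xx
      omega
  rw [this, Finset.card_image_of_injective _ p.xx_inj, PNat.card_Icc]
  simp
  omega

theorem ed_eq (δ : ℤ) (p : Ptn) (i j : ℕ+) : ed δ p i + ed δ p j = 0 ↔ p.xx i + p.xx j = δ := by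
  unfold ed xx
  rw [← @Int.cast_inj ℚ]
  push_cast
  constructor <;> intro h <;> linarith

theorem degd_eq_s17 (δ : ℤ) (p : Ptn) (N : ℤ) (hN' : (p.transpose 1 : ℤ) ≤ N) :
    open Classical in
    degd δ p = ((Finset.Icc (δ - N) N).filter
      (fun a => a ∈ p.X ∧ δ - a ∈ p.X ∧ δ < 2 * a)).card := by
  classical
  have hX : ∀ i, p.xx i ≤ N := by
    intro i
    have h3 := p.transpose_anti 1 i (PNat.one_le i)
    have h4 := i.pos
    unfold xx
    omega
  rw [← Set.ncard_coe_finset]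
  unfold degd
  refine Set.ncard_congr (fun q _ => p.xx q.1) ?_ ?_ ?_
  · rintro ⟨i, j⟩ ⟨h1, h2⟩
    rw [ed_eq] at h2
    simp only at h1 h2
    have := p.xx_lt h1
    have h3 := hX i
    have h4 := hX j
    simp only [Finset.coe_filter, Finset.mem_Icc, Set.mem_setOf_eq]
    refine ⟨by omega, ⟨i, rfl⟩, ⟨j, by omega⟩, by omega⟩
  · rintro ⟨i, j⟩ ⟨i', j'⟩ ⟨h1, h2⟩ ⟨h1', h2'⟩ h
    rw [ed_eq] at h2 h2'
    simp only at h h2 h2'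
    have e1 := p.xx_inj h
    have e2 : j = j' := p.xx_inj (by omega)
    rw [e1, e2]
  · intro a ha
    simp only [Finset.coe_filter, Finset.mem_Icc, Set.mem_setOf_eq] at ha
    obtain ⟨_, ⟨i, rfl⟩, ⟨j, hj⟩, h⟩ := ha
    refine ⟨(i, j), ⟨?_, ?_⟩, rfl⟩
    · rw [← p.xx_lt_iff]; simp only; omega
    · rw [ed_eq]; simp only; omega

end Ptn

open Classical in
theorem count_aux (δ N : ℤ) (h : 0 ≤ 2 * N - δ + 1) (X : Set ℤ)
    (hX : (((Finset.Icc (δ - N) N).filter (fun a => a ∈ X)).card : ℤ) = N - δ + 1) :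
    2 * (((Finset.Icc (δ - N) N).filter
      (fun a => a ∈ X ∧ δ - a ∈ X ∧ δ < 2 * a)).card : ℤ)
    + (((Finset.Icc (δ - N) N).filter (fun a => 2 * a = δ ∧ a ∈ X)).card : ℤ)
    = 1 - δ + (((Finset.Icc (δ - N) N).filter (fun a => a ∉ X ∧ δ - a ∉ X)).card : ℤ) := by
  have hrefl : ∀ (P : ℤ → Prop) [DecidablePred P], ∑ a ∈ Finset.Icc (δ - N) N, (if P (δ - a) then (1 : ℤ) else 0)
      = ∑ a ∈ Finset.Icc (δ - N) N, (if P a then (1 : ℤ) else 0) := by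
    intro P _
    refine Finset.sum_bij' (fun a _ => δ - a) (fun a _ => δ - a) ?_ ?_ ?_ ?_ ?_
    · intro a ha; simp only [Finset.mem_Icc] at *; omega
    · intro a ha; simp only [Finset.mem_Icc] at *; omega
    · intro a ha; omega
    · intro a ha; omega
    · intro a ha; simp
  have hW : ∑ a ∈ Finset.Icc (δ - N) N, (1 : ℤ) = 2 * N - δ + 1 := by
    rw [Finset.sum_const, Int.card_Icc]
    simp
    omega
  have r1 := hrefl (fun a => a ∈ X)
  have r2 := hrefl (fun a => a ∈ X ∧ δ - a ∈ X ∧ δ < 2 * a)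
  simp only [Finset.card_filter] at *
  push_cast at *
  have key : ∑ a ∈ Finset.Icc (δ - N) N, (
      (if a ∈ X ∧ δ - a ∈ X ∧ δ < 2 * a then (1 : ℤ) else 0)
      + (if δ - a ∈ X ∧ δ - (δ - a) ∈ X ∧ δ < 2 * (δ - a) then (1 : ℤ) else 0)
      + (if 2 * a = δ ∧ a ∈ X then (1 : ℤ) else 0))
      = ∑ a ∈ Finset.Icc (δ - N) N, (
      (if a ∈ X then (1 : ℤ) else 0) + (if δ - a ∈ X then (1 : ℤ) else 0) - 1
      + (if a ∉ X ∧ δ - a ∉ X then (1 : ℤ) else 0)) := by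
    refine Finset.sum_congr rfl fun a _ => ?_
    have e : δ - (δ - a) = a := by omega
    rw [e]
    rcases lt_trichotomy (2 * a) δ with h1 | h1 | h1
    · have h2 : ¬ δ < 2 * a := by omega
      have h3 : δ < 2 * (δ - a) := by omega
      have h4 : ¬ 2 * a = δ := by omega
      simp only [h2, h3, h4]
      by_cases c1 : a ∈ X <;> by_cases c2 : δ - a ∈ X <;> simp [c1, c2]
    · have h2 : ¬ δ < 2 * a := by omega
      have h3 : δ - a = a := by omega
      simp only [h2, h3, h1]
      by_cases c1 : a ∈ X <;> simp [c1]
    · have h2 : ¬ δ < 2 * (δ - a) := by omega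
      have h4 : ¬ 2 * a = δ := by omega
      simp only [h2, h1, h4]
      by_cases c1 : a ∈ X <;> by_cases c2 : δ - a ∈ X <;> simp [c1, c2]
  simp only [Finset.sum_add_distrib, Finset.sum_sub_distrib] at key
  linarith

theorem X_empty (a : ℤ) (h : a ≤ 0) : a ∈ Ptn.empty.X := by
  by_contra hc
  rw [Ptn.notMem_X] at hc
  obtain ⟨j, hj⟩ := hc
  have := j.pos
  simp [Ptn.empty] at hj
  omega

theorem reg_neg (δ : ℤ) (hδ : δ < 0) (p : Ptn) :
    degd δ p = degd δ Ptn.empty ↔ ∀ a : ℤ, a ∈ p.X ∨ δ - a ∈ p.X := by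
  classical
  obtain ⟨N, hN⟩ : ∃ N : ℤ, N = p.toFun 1 + p.transpose 1 := ⟨_, rfl⟩
  have hE1 : Ptn.empty.toFun 1 = 0 := rfl
  have hE2 := Ptn.transpose_empty 1
  have d1 := Ptn.degd_eq_s17 δ p N (by omega)
  have d2 := Ptn.degd_eq_s17 δ Ptn.empty N (by omega)
  have c1 := count_aux δ N (by omega) p.X (p.X_card δ N (by omega) (by omega) (by omega))
  have c2 := count_aux δ N (by omega) Ptn.empty.X
    (Ptn.empty.X_card δ N (by omega) (by omega) (by omega))
  have y0 : ((Finset.Icc (δ - N) N).filter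
      (fun a => a ∉ Ptn.empty.X ∧ δ - a ∉ Ptn.empty.X)).card = 0 := by
    rw [Finset.card_eq_zero, Finset.filter_eq_empty_iff]
    rintro a _ ⟨h1, h2⟩
    have h3 : ¬ a ≤ 0 := fun h => h1 (X_empty _ h)
    have h4 : ¬ δ - a ≤ 0 := fun h => h2 (X_empty _ h)
    omega
  have hle : ((Finset.Icc (δ - N) N).filter (fun a => 2 * a = δ ∧ a ∈ p.X)).card
      ≤ ((Finset.Icc (δ - N) N).filter (fun a => 2 * a = δ ∧ a ∈ Ptn.empty.X)).card := by
    refine Finset.card_le_card fun a ha => ?_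
    simp only [Finset.mem_filter] at *
    exact ⟨ha.1, ha.2.1, X_empty _ (by omega)⟩
  rw [← d1] at c1
  rw [← d2] at c2
  constructor
  · intro h a
    have hz : ((Finset.Icc (δ - N) N).filter
      (fun a => a ∉ p.X ∧ δ - a ∉ p.X)).card = 0 := by omega
    rw [Finset.card_eq_zero, Finset.filter_eq_empty_iff] at hz
    by_contra hc
    push Not at hc
    have hb : ∀ b, b ∉ p.X → δ - N ≤ b := by
      intro b hb
      rw [Ptn.notMem_X] at hb
      obtain ⟨j, rfl⟩ := hb
      have := p.antitone' 1 j (PNat.one_le j)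
      have := j.pos
      omega
    have h1 := hb _ hc.1
    have h2 := hb _ hc.2
    exact hz (Finset.mem_Icc.2 ⟨h1, by omega⟩) hc
  · intro h
    have hz : ((Finset.Icc (δ - N) N).filter
      (fun a => a ∉ p.X ∧ δ - a ∉ p.X)).card = 0 := by
      rw [Finset.card_eq_zero, Finset.filter_eq_empty_iff]
      rintro a _ ⟨h1, h2⟩
      exact (h a).elim h1 h2
    have hle' : ((Finset.Icc (δ - N) N).filter (fun a => 2 * a = δ ∧ a ∈ Ptn.empty.X)).card
      ≤ ((Finset.Icc (δ - N) N).filter (fun a => 2 * a = δ ∧ a ∈ p.X)).card := by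
      refine Finset.card_le_card fun a ha => ?_
      simp only [Finset.mem_filter] at *
      refine ⟨ha.1, ha.2.1, ?_⟩
      have := h a
      rwa [show δ - a = a by omega, or_self] at this
    omega

theorem reg_pos_of (δ : ℤ) (p : Ptn) (h : (p.transpose 1 : ℤ) + (p.transpose 2 : ℤ) ≤ δ) :
    degd δ p = 0 := by
  classical
  rw [p.degd_eq_s17 δ _ le_rfl, Finset.card_eq_zero, Finset.filter_eq_empty_iff]
  rintro a _ ⟨⟨i, rfl⟩, ⟨j, hj⟩, h3⟩
  have hij : i < j := by rw [← p.xx_lt_iff]; omega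
  have h1 := p.transpose_anti 1 i (PNat.one_le i)
  have hi := i.pos
  have hij' : (i : ℕ) < j := hij
  have h2 := p.transpose_anti 2 j (by
    rw [← PNat.coe_le_coe]
    simp
    omega)
  unfold Ptn.xx at *
  omega

theorem reg_pos_ne (δ : ℤ) (p : Ptn) (h : degd δ p = 0) :
    (p.transpose 1 : ℤ) + (p.transpose 2 : ℤ) ≠ δ + 1 := by
  classical
  intro hc
  rw [p.degd_eq_s17 δ _ le_rfl, Finset.card_eq_zero, Finset.filter_eq_empty_iff] at h
  have h1 := p.transpose_anti 1 2 (by decide)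
  have e1 : p.xx 1 = (p.transpose 1 : ℤ) := by simp [Ptn.xx]
  have e2 : p.xx 2 = (p.transpose 2 : ℤ) - 1 := by simp [Ptn.xx]; omega
  refine h (x := p.xx 1) (Finset.mem_Icc.2 ⟨by omega, by omega⟩) ⟨⟨1, rfl⟩, ⟨2, by omega⟩, by omega⟩

theorem addbox_transpose (p q : Ptn) (k : ℕ+) (h : AddBoxAt p q k) :
    q.transpose 1 + q.transpose 2 ≤ p.transpose 1 + p.transpose 2 + 1 := by
  have h1 : ∀ i : ℕ+, q.transpose i ≤ p.transpose i + 1 := by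
    intro i
    unfold Ptn.transpose
    refine le_trans (Set.ncard_le_ncard (t := insert k {t | (i : ℕ) ≤ p.toFun t}) ?_
      ((p.fin_set i).insert k)) (Set.ncard_insert_le _ _)
    intro t ht
    by_cases c : t = k
    · left; exact c
    · right
      simp only [Set.mem_setOf_eq] at *
      rwa [← h.2 t c]
  have h2 : ∀ i : ℕ+, (i : ℕ) ≠ q.toFun k → q.transpose i ≤ p.transpose i := by
    intro i hi
    unfold Ptn.transpose
    refine Set.ncard_le_ncard ?_ (p.fin_set i)
    intro t ht
    simp only [Set.mem_setOf_eq] at *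
    by_cases c : t = k
    · subst c
      have := h.1
      omega
    · rwa [← h.2 t c]
  by_cases c : q.toFun k = 1
  · have := h1 1
    have := h2 2 (by simp [c])
    omega
  · have := h2 1 (by simp; omega)
    have := h1 2
    omega

/-- The combinatorial condition. -/
def Cond (δ : ℤ) (p : Ptn) : Prop :=
      (0 ≤ δ ∧ (p.transpose 1 : ℤ) + (p.transpose 2 : ℤ) ≤ δ) ∨
      (δ < 0 ∧ Even δ ∧ 2 * (p.toFun 1 : ℤ) ≤ -δ) ∨
      (δ < 0 ∧ Odd δ ∧ (p.toFun 1 : ℤ) + (p.toFun 2 : ℤ) ≤ 2 - δ)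

theorem Cond.mono {δ : ℤ} {p q : Ptn} (h : Cond δ q) (hle : ∀ k, p.toFun k ≤ q.toFun k) :
    Cond δ p := by
  have t1 := p.transpose_mono q hle 1
  have t2 := p.transpose_mono q hle 2
  have h1 := hle 1
  have h2 := hle 2
  rcases h with ⟨a, b⟩ | ⟨a, b, c⟩ | ⟨a, b, c⟩
  · exact Or.inl ⟨a, by omega⟩
  · exact Or.inr (Or.inl ⟨a, b, by omega⟩)
  · exact Or.inr (Or.inr ⟨a, b, by omega⟩)

theorem cond_empty (δ : ℤ) : Cond δ Ptn.empty := by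
  unfold Cond
  have h : ∀ i, Ptn.empty.toFun i = 0 := fun _ => rfl
  simp only [Ptn.transpose_empty, h]
  rcases lt_or_ge δ 0 with h1 | h1
  · rcases Int.even_or_odd δ with h2 | h2
    · exact Or.inr (Or.inl ⟨h1, h2, by omega⟩)
    · exact Or.inr (Or.inr ⟨h1, h2, by omega⟩)
  · exact Or.inl ⟨h1, by omega⟩

theorem Cond.reg {δ : ℤ} {p : Ptn} (h : Cond δ p) : degd δ p = degd δ Ptn.empty := by
  rcases h with ⟨a, b⟩ | ⟨a, b, c⟩ | ⟨a, b, c⟩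
  · rw [reg_pos_of δ p b, reg_pos_of]
    simp only [Ptn.transpose_empty]
    omega
  · rw [reg_neg δ a]
    intro x
    by_contra hc
    push Not at hc
    rw [Ptn.notMem_X, Ptn.notMem_X] at hc
    obtain ⟨⟨j, hj⟩, ⟨k, hk⟩⟩ := hc
    have := p.antitone' 1 j (PNat.one_le j)
    have := p.antitone' 1 k (PNat.one_le k)
    have := j.pos
    have := k.pos
    omega
  · rw [reg_neg δ a]
    intro x
    by_contra hc
    push Not at hc
    rw [Ptn.notMem_X, Ptn.notMem_X] at hc
    obtain ⟨⟨j, hj⟩, ⟨k, hk⟩⟩ := hc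
    have h1 := p.antitone' 1 j (PNat.one_le j)
    have h2 := p.antitone' 1 k (PNat.one_le k)
    have h3 := j.pos
    have h4 := k.pos
    have two : ∀ i : ℕ+, 2 ≤ (i : ℕ) → p.toFun i ≤ p.toFun 2 := by
      intro i hi
      exact p.antitone' 2 i (by rw [← PNat.coe_le_coe]; simpa using hi)
    rcases lt_trichotomy (j : ℕ) k with h | h | h
    · have := two k (by omega)
      omega
    · have : j = k := PNat.eq h
      subst this
      obtain ⟨m, hm⟩ := b
      omega
    · have := two j (by omega)
      omega

theorem Cond.step {δ : ℤ} {p q : Ptn} (h : Cond δ p) (he : YoungEdge p q)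
    (hr : degd δ q = degd δ Ptn.empty) : Cond δ q := by
  rcases he with ⟨k, hk⟩ | ⟨k, hk⟩
  · have ht := addbox_transpose p q k hk
    have hn : ∀ j : ℕ+, ((j : ℕ) - (q.toFun j : ℤ)) ∉ q.X := fun j => (q.notMem_X _).2 ⟨j, rfl⟩
    have ho1 : q.toFun 1 ≤ p.toFun 1 + 1 := by
      by_cases c : 1 = k
      · subst c; exact hk.1.le
      · rw [hk.2 1 c]; omega
    rcases h with ⟨a, b⟩ | ⟨a, b, c⟩ | ⟨a, b, c⟩
    · rw [(cond_empty δ).reg.symm.trans (reg_pos_of δ Ptn.empty (by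
        simp only [Ptn.transpose_empty]; omega))] at hr
      have := reg_pos_ne δ q hr
      exact Or.inl ⟨a, by omega⟩
    · rw [reg_neg δ a] at hr
      refine Or.inr (Or.inl ⟨a, b, ?_⟩)
      by_contra hc
      have h1 := hn 1
      have h2 := hr (((1 : ℕ+) : ℕ) - (q.toFun 1 : ℤ))
      obtain ⟨m, hm⟩ := b
      rw [show δ - (((1 : ℕ+) : ℕ) - (q.toFun 1 : ℤ)) = ((1 : ℕ+) : ℕ) - (q.toFun 1 : ℤ) by
        simp; omega, or_self] at h2
      exact h1 h2
    · rw [reg_neg δ a] at hr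
      refine Or.inr (Or.inr ⟨a, b, ?_⟩)
      by_contra hc
      have ho2 : q.toFun 1 + q.toFun 2 ≤ p.toFun 1 + p.toFun 2 + 1 := by
        by_cases c : 1 = k
        · subst c
          rw [hk.2 2 (by decide), hk.1]; omega
        · rw [hk.2 1 c]
          by_cases c : 2 = k
          · subst c; rw [hk.1]; omega
          · rw [hk.2 2 c]; omega
      have h1 := hn 1
      have h3 := hn 2
      have h2 := hr (((1 : ℕ+) : ℕ) - (q.toFun 1 : ℤ))
      rw [show δ - (((1 : ℕ+) : ℕ) - (q.toFun 1 : ℤ)) = ((2 : ℕ+) : ℕ) - (q.toFun 2 : ℤ) by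
        simp; omega] at h2
      exact h2.elim h1 h3
  · refine h.mono fun t => ?_
    by_cases c : t = k
    · subst c; rw [hk.1]; omega
    · rw [hk.2 t c]

theorem InAdelta.step {δ : ℤ} {p q : Ptn} (h : InAdelta δ p) (he : YoungEdge p q)
    (hr : degd δ q = degd δ Ptn.empty) : InAdelta δ q := by
  obtain ⟨r, c, h0, h1, h2, h3⟩ := h
  refine ⟨r + 1, fun t => if t ≤ r then c t else q, by simp [h0], by simp, ?_, ?_⟩
  · intro t ht
    by_cases c : t ≤ r
    · simp only [c, if_true]; exact h2 t c
    · simp only [c, if_false]; exact hr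
  · intro t ht
    by_cases c : t = r
    · subst c
      simpa [h1] using he
    · have h4 : t ≤ r := by omega
      have h5 : t + 1 ≤ r := by omega
      simp only [h4, h5, if_true]
      exact h3 t (by omega)

theorem inA_of_cond (δ : ℤ) (L : ℕ) : ∀ m : ℕ, ∀ p : Ptn, (∀ i : ℕ+, L + 1 < (i : ℕ) → p.toFun i = 0) →
    p.toFun L.succPNat = m → Cond δ p → InAdelta δ p := by
  have hbase : ∀ p : Ptn, p.toFun 1 = 0 → InAdelta δ p := by
    intro p hp
    have : p = Ptn.empty := by
      have : p.toFun = Ptn.empty.toFun := by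
        funext i
        have := p.antitone' 1 i (PNat.one_le i)
        simp only [Ptn.empty]
        omega
      cases p
      simp only [Ptn.empty] at *
      subst this
      rfl
    subst this
    exact ⟨0, fun _ => Ptn.empty, rfl, rfl, fun _ _ => rfl, fun t ht => by omega⟩
  induction L with
  | zero =>
    intro m
    induction m with
    | zero => intro p _ h2 _; exact hbase p h2
    | succ m ih =>
      intro p h1 h2 h3
      have hlt : ∀ i : ℕ+, i ≠ 1 → p.toFun i = 0 := by
        intro i hi
        apply h1
        have := i.pos
        have : (i : ℕ) ≠ 1 := fun h => hi (PNat.eq h)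
        omega
      have e1 : Nat.succPNat 0 = 1 := rfl
      rw [e1] at h2
      let q : Ptn := ⟨fun i => if i = 1 then m else 0, by
        intro i j hij
        by_cases c : j = 1
        · subst c
          have : i = 1 := le_antisymm hij (PNat.one_le i)
          simp [this]
        · simp [c], ⟨2, by
            intro i hi
            have : i ≠ 1 := by rintro rfl; exact absurd hi (by decide)
            simp [this]⟩⟩
      have hq : AddBoxAt q p 1 := by
        refine ⟨by simp [q, h2], fun t ht => by simp [q, ht, hlt t ht]⟩
      have hle : ∀ k, q.toFun k ≤ p.toFun k := by
        intro k
        by_cases c : k = 1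
        · subst c; simp [q, h2]
        · simp [q, c]
      refine (ih q ?_ ?_ (h3.mono hle)).step (Or.inl ⟨1, hq⟩) h3.reg
      · intro i hi
        have := hle i
        have := h1 i hi
        omega
      · rw [e1]; simp [q]
  | succ L ihL =>
    intro m
    induction m with
    | zero =>
      intro p h1 h2 h3
      refine ihL _ p ?_ rfl h3
      intro i hi
      by_cases c : (i : ℕ) = L + 2
      · have : i = (L + 1).succPNat := PNat.eq (by simp [c])
        rw [this, h2]
      · exact h1 i (by omega)
    | succ m ih =>
      intro p h1 h2 h3
      let K : ℕ+ := (L + 1).succPNat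
      have hK : (K : ℕ) = L + 2 := by simp [K]
      have h2' : p.toFun K = m + 1 := h2
      let q : Ptn := ⟨fun i => if i = K then m else p.toFun i, by
        intro i j hij
        have hh := p.antitone' i j hij
        by_cases c : i = K
        · by_cases c' : j = K
          · simp [c, c']
          · have hKj : (K : ℕ) < j := lt_of_le_of_ne (by subst c; exact hij)
              (fun h => c' (PNat.eq h.symm))
            have := h1 j (by omega)
            simp [c', this]
        · by_cases c' : j = K
          · subst c'
            simp only [c, if_true, if_false]
            omega
          · simpa [c, c'] using hh, by
            obtain ⟨N, hN⟩ := p.finite_support'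
            refine ⟨N, fun i hi => ?_⟩
            have := hN i hi
            by_cases c : i = K
            · subst c; omega
            · simpa [c] using this⟩
      have hq : AddBoxAt q p K := by
        refine ⟨by simp [q, h2'], fun t ht => by simp [q, ht]⟩
      have hle : ∀ k, q.toFun k ≤ p.toFun k := by
        intro k
        by_cases c : k = K
        · subst c; simp [q, h2']
        · simp [q, c]
      refine (ih q ?_ ?_ (h3.mono hle)).step (Or.inl ⟨K, hq⟩) h3.reg
      · intro i hi
        have := hle i
        have := h1 i hi
        omega
      · simp [q, K]

theorem stmt17 (δ : ℤ) (p : Ptn) :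
    InAdelta δ p ↔
      (0 ≤ δ ∧ (p.transpose 1 : ℤ) + (p.transpose 2 : ℤ) ≤ δ) ∨
      (δ < 0 ∧ Even δ ∧ 2 * (p.toFun 1 : ℤ) ≤ -δ) ∨
      (δ < 0 ∧ Odd δ ∧ (p.toFun 1 : ℤ) + (p.toFun 2 : ℤ) ≤ 2 - δ) := by
  change InAdelta δ p ↔ Cond δ p
  constructor
  · rintro ⟨r, c, h0, rfl, h2, h3⟩
    have : ∀ t ≤ r, Cond δ (c t) := by
      intro t
      induction t with
      | zero => intro _; rw [h0]; exact cond_empty δ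
      | succ t ih =>
        intro ht
        exact (ih (by omega)).step (h3 t (by omega)) (h2 _ ht)
    exact this r le_rfl
  · intro h
    obtain ⟨N, hN⟩ := p.finite_support'
    refine inA_of_cond δ N _ p ?_ rfl h
    intro i hi
    apply hN
    rw [← PNat.coe_le_coe]
    omega
end

section
/- Let δ ∈ ℤ, let s ∈ {1, −1}, and let λ, μ, ν be partitions and i ≠ j positive integers such that μ^T equals λ^T with its j-th part decreased by s and ν^T equals μ^T with its i-th part increased by s (equivalently, e_δ(μ) = e_δ(λ) − s·ε_j and e_δ(ν) = e_δ(λ) + s·ε_i − s·ε_j). If deg_δ(λ) = deg_δ(μ) = deg_δ(ν), then e_δ(λ)_i + e_δ(λ)_j ≠ 0. -/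
open Polynomial

theorem transpose_anti_aux (p : Ptn) (a b : ℕ+) (h : a ≤ b) :
    p.transpose b ≤ p.transpose a := by
  unfold Ptn.transpose
  apply Set.ncard_le_ncard
  · intro k hk
    have h' : (a : ℕ) ≤ b := h
    exact le_trans h' hk
  · obtain ⟨N, hN⟩ := p.finite_support'
    apply (Set.finite_Iio N).subset
    intro k hk
    by_contra hlt
    have h0 := hN k (not_lt.mp hlt)
    have h1 : (a : ℕ) ≤ p.toFun k := hk
    have := a.pos
    omega

theorem ed_lt_aux (δ : ℤ) (p : Ptn) (a b : ℕ+) (h : a < b) : ed δ p b < ed δ p a := by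
  unfold ed
  have h1 : (p.transpose b : ℚ) ≤ p.transpose a := by
    exact_mod_cast transpose_anti_aux p a b h.le
  have h2 : ((a : ℕ) : ℚ) < ((b : ℕ) : ℚ) := by exact_mod_cast h
  linarith

theorem ed_inj_aux (δ : ℤ) (p : Ptn) (a b : ℕ+) (h : ed δ p a = ed δ p b) : a = b := by
  rcases lt_trichotomy a b with hl | hl | hl
  · have := ed_lt_aux δ p a b hl
    linarith
  · exact hl
  · have := ed_lt_aux δ p b a hl
    linarith

theorem pairs_finite_aux (δ : ℤ) (p : Ptn) :
    {q : ℕ+ × ℕ+ | q.1 < q.2 ∧ ed δ p q.1 + ed δ p q.2 = 0}.Finite := by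
  let M : ℕ+ := ⟨2 * p.transpose 1 + δ.natAbs + 3, by omega⟩
  apply ((Set.finite_Iic M).prod (Set.finite_Iic M)).subset
  rintro ⟨a, b⟩ ⟨hab, hs⟩
  simp only at hab hs
  have hb : b ≤ M := by
    have h1 := transpose_anti_aux p 1 a (PNat.one_le a)
    have h2 := transpose_anti_aux p 1 b (PNat.one_le b)
    unfold ed at hs
    have h3 : ((p.transpose a : ℤ) : ℚ) + (p.transpose b : ℤ) - δ - ((a : ℕ) : ℤ)
        - ((b : ℕ) : ℤ) + 2 = 0 := by
      push_cast
      linarith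
    have h4 : (p.transpose a : ℤ) + (p.transpose b : ℤ) - δ - ((a : ℕ) : ℤ)
        - ((b : ℕ) : ℤ) + 2 = 0 := by exact_mod_cast h3
    change (b : ℕ) ≤ 2 * p.transpose 1 + δ.natAbs + 3
    omega
  exact ⟨hab.le.trans hb, hb⟩

/-- for the down-up walk λ → μ → ν (e_δ(μ) = e_δ(λ) − s·ε_j,
e_δ(ν) = e_δ(λ) + s·ε_i − s·ε_j, s = ±1, i ≠ j), if λ, μ, ν all have the same
δ-degree of singularity then e_δ(λ)_i + e_δ(λ)_j ≠ 0. -/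
theorem stmt18 (δ s : ℤ) (hs : s = 1 ∨ s = -1)
    (lam mu nu : Ptn) (i j : ℕ+) (hij : i ≠ j)
    (hmu : (mu.transpose j : ℤ) = (lam.transpose j : ℤ) - s ∧
      ∀ t : ℕ+, t ≠ j → mu.transpose t = lam.transpose t)
    (hnu : (nu.transpose i : ℤ) = (mu.transpose i : ℤ) + s ∧
      ∀ t : ℕ+, t ≠ i → nu.transpose t = mu.transpose t)
    (hdeg : degd δ lam = degd δ mu ∧ degd δ mu = degd δ nu) :
    ed δ lam i + ed δ lam j ≠ 0 := by
  intro hsum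
  have hs0 : (s : ℚ) ≠ 0 := by
    rcases hs with h | h <;> simp [h]
  have hmuj : ed δ mu j = ed δ lam j - s := by
    have : (mu.transpose j : ℚ) = (lam.transpose j : ℚ) - s := by exact_mod_cast hmu.1
    unfold ed
    linarith
  have hmut : ∀ t, t ≠ j → ed δ mu t = ed δ lam t := by
    intro t ht
    unfold ed
    rw [hmu.2 t ht]
  have hnui : ed δ nu i = ed δ mu i + s := by
    have : (nu.transpose i : ℚ) = (mu.transpose i : ℚ) + s := by exact_mod_cast hnu.1
    unfold ed
    linarith
  have hnut : ∀ t, t ≠ i → ed δ nu t = ed δ mu t := by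
    intro t ht
    unfold ed
    rw [hnu.2 t ht]
  have hmui := hmut i hij
  -- no partner of j in mu
  have key : ∀ t, t ≠ j → ed δ mu t + ed δ mu j ≠ 0 := by
    intro t htj h
    by_cases hti : t = i
    · subst hti
      apply hs0
      linarith
    · apply hti
      apply ed_inj_aux δ nu
      rw [hnut t hti, hnui]
      linarith
  have hlt : degd δ mu < degd δ lam := by
    unfold degd
    apply Set.ncard_lt_ncard _ (pairs_finite_aux δ lam)
    rw [Set.ssubset_iff_subset_ne]
    constructor
    · rintro ⟨a, b⟩ ⟨hab, h⟩
      simp only at hab h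
      have ha : a ≠ j := by
        rintro rfl
        exact key b hab.ne' (by linarith)
      have hb : b ≠ j := by
        rintro rfl
        exact key a hab.ne (by linarith)
      rw [hmut a ha, hmut b hb] at h
      exact ⟨hab, h⟩
    · intro heq
      rcases lt_or_gt_of_ne hij with hl | hl
      · have hm : ((i, j) : ℕ+ × ℕ+) ∈
            {q : ℕ+ × ℕ+ | q.1 < q.2 ∧ ed δ lam q.1 + ed δ lam q.2 = 0} := ⟨hl, hsum⟩
        rw [← heq] at hm
        exact key i hij hm.2
      · have hm : ((j, i) : ℕ+ × ℕ+) ∈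
            {q : ℕ+ × ℕ+ | q.1 < q.2 ∧ ed δ lam q.1 + ed δ lam q.2 = 0} :=
          ⟨hl, by simp only; linarith⟩
        rw [← heq] at hm
        exact key i hij (by have := hm.2; simp only at this; linarith)
  have := hdeg.1
  omega
end
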